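/- arXiv:1105.1986 — 2 statements merged into one kernel-verified Lean document; each statement's English description precedes it below -/
import Mathlib

section
/- For every R ∈ (0, π], the three-dimensional Lebesgue measure of the rotational body B'(R) = {(0,0,0)} ∪ { ( X(r,θ)·cos φ, X(r,θ)·sin φ, Z(r,θ) ) : r ∈ (0, R], θ ∈ [−π/2, π/2], φ ∈ (−π, π] } equals V(R) := 2π ∫₀^{π/2} X(R, θ)² · (∂Z/∂θ)(R, θ) dθ. -/
/-!
In terms of `w = r sin θ` the profile functions read `X = r cos θ sinc (w / 2)` and
`Z = w + r² cos² θ (w - sin w) / (2 w²)`. Eliminating `r cos θ` gives, at fixed distance `ρ = X`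
from the axis,

  `Z = w + ρ² (w - sin w) / (4 w² sinc² (w / 2))`  and  `r² = w² + ρ² / sinc² (w / 2)`.

Since `sinc` decreases and `(w - sin w) / w²` increases on `[0, π]`, both expressions increase with
`w ∈ [0, π]`. Hence, if `ρ = X(R, θ₀)` with `0 < θ₀ < π / 2`, the condition `r ≤ R` cuts out exactly
the segment `|z| ≤ Z(R, θ₀)` of the line at distance `ρ` from the axis (`nilSlice_eq`). No such point
exists when `ρ > R`, because `X ≤ r`.

Cylindrical coordinates (`volume_eq_lintegral_slice`) therefore express the volume as
`2π ∫₀ᴿ ρ · 2 Z dρ`. For fixed `R` the function `X(R, ·)` decreases from `R` to `0` on `[0, π / 2]`,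
so the substitution `ρ = X(R, θ)` turns the integral into `-2π ∫ 2 X X' Z dθ`
(`lintegral_slice_eq`), and integration by parts into `2π ∫ X² Z' dθ` (`integral_by_parts`).

The removable singularities at `θ = 0` are dealt with by writing `X` and `Z` through the analytic
functions `sinc` and `nilG`, where `nilG w = (sin w - w) / w²`.
-/

open Real

/-- The radial profile function `X(r, θ)` of the Nil geodesic sphere of radius `r`
(in the projective model, after the quadratic mapping). -/
noncomputable def nilX (r θ : ℝ) : ℝ :=
  if θ = 0 then r else (2 * cos θ / sin θ) * sin (r * sin θ / 2)

/-- The height profile function `Z(r, θ)` of the Nil geodesic sphere of radius `r`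
(in the projective model, after the quadratic mapping). -/
noncomputable def nilZ (r θ : ℝ) : ℝ :=
  if θ = 0 then 0 else
    r * sin θ + r * cos θ ^ 2 / (2 * sin θ) -
      (cos θ ^ 2 / (2 * sin θ ^ 2)) * sin (r * sin θ)

/-- The rotational body `B'(R)`, the 𝓜-image of the Nil geodesic ball of radius `R`. -/
noncomputable def nilBall' (R : ℝ) : Set (ℝ × ℝ × ℝ) :=
  {p | p = (0, 0, 0) ∨
    ∃ r ∈ Set.Ioc 0 R, ∃ θ ∈ Set.Icc (-(π / 2)) (π / 2), ∃ φ ∈ Set.Ioc (-π) π,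
      p = (nilX r θ * cos φ, nilX r θ * sin φ, nilZ r θ)}

/-! ### Removing the singularity at `θ = 0` -/

/-- The slope of an everywhere analytic function from a fixed base point is analytic: its power
series at the base point is the shifted one. -/
theorem analyticAt_dslope {f : ℝ → ℝ} (hf : ∀ x, AnalyticAt ℝ f x) (a : ℝ) (x : ℝ) :
    AnalyticAt ℝ (dslope f a) x := by
  by_cases hx : x = a
  · subst hx
    obtain ⟨p, hp⟩ := hf x
    exact ⟨_, hp.has_fpower_series_dslope_fslope⟩
  · have h : AnalyticAt ℝ (fun y => (y - a)⁻¹ * (f y - f a)) x :=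
      ((analyticAt_id.sub analyticAt_const).inv (sub_ne_zero.2 hx)).mul
        ((hf x).sub analyticAt_const)
    refine h.congr ?_
    filter_upwards [isOpen_ne.mem_nhds hx] with y hy
    rw [dslope_of_ne _ hy, slope_def_field]
    ring

theorem analyticAt_sinc (x : ℝ) : AnalyticAt ℝ sinc x := by
  rw [sinc_eq_dslope]
  exact analyticAt_dslope (fun x => analyticAt_sin) 0 x

/-- The function `w ↦ (sin w - w) / w²`, realised as the slope of `sinc` from `0`
(which also gives the value at the removable singularity `w = 0`). -/
noncomputable def nilG : ℝ → ℝ := dslope sinc 0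

theorem nilG_zero : nilG 0 = 0 := by
  have h := deriv_comp_neg sinc 0
  have h2 : (fun x => sinc (-x)) = sinc := by ext x; exact sinc_neg x
  rw [h2, neg_zero] at h
  rw [nilG, dslope_same]
  linarith

theorem nilG_of_ne {w : ℝ} (hw : w ≠ 0) : nilG w = (sin w - w) / w ^ 2 := by
  rw [nilG, dslope_of_ne _ hw, slope_def_field, sinc_zero, sinc_of_ne_zero hw]
  field_simp
  ring

theorem contDiff_sinc : ContDiff ℝ 1 sinc :=
  contDiff_iff_contDiffAt.2 fun x => (analyticAt_sinc x).contDiffAt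

theorem contDiff_nilG : ContDiff ℝ 1 nilG :=
  contDiff_iff_contDiffAt.2 fun x => (analyticAt_dslope analyticAt_sinc 0 x).contDiffAt

theorem nilG_neg (w : ℝ) : nilG (-w) = -nilG w := by
  by_cases hw : w = 0
  · simp [hw, nilG_zero]
  · rw [nilG_of_ne hw, nilG_of_ne (neg_ne_zero.2 hw), sin_neg]
    field_simp
    ring

theorem sin_ne_zero_of_mem {θ : ℝ} (hθ : θ ∈ Set.Icc (-(π / 2)) (π / 2)) (h : θ ≠ 0) :
    sin θ ≠ 0 := by
  have := pi_pos
  exact fun h' => h ((sin_eq_zero_iff_of_lt_of_lt (by linarith [hθ.1]) (by linarith [hθ.2])).1 h')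

theorem nilX_eq (r : ℝ) {θ : ℝ} (hθ : θ ∈ Set.Icc (-(π / 2)) (π / 2)) :
    nilX r θ = r * cos θ * sinc (r * sin θ / 2) := by
  by_cases h : θ = 0
  · simp [nilX, h]
  have hs := sin_ne_zero_of_mem hθ h
  rcases eq_or_ne r 0 with rfl | hr
  · simp [nilX]
  rw [nilX, if_neg h, sinc_of_ne_zero (by positivity)]
  field_simp

theorem nilZ_eq (r θ : ℝ) :
    nilZ r θ = r * sin θ - r ^ 2 * cos θ ^ 2 * nilG (r * sin θ) / 2 := by
  by_cases h : θ = 0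
  · simp [nilZ, h, nilG_zero]
  rcases eq_or_ne r 0 with rfl | hr
  · simp [nilZ]
  rcases eq_or_ne (sin θ) 0 with hs | hs
  · simp [nilZ, hs, nilG_zero]
  rw [nilZ, if_neg h, nilG_of_ne (by positivity)]
  field_simp
  ring

/-! ### Monotonicity of `sinc` and `nilG` on `[0, π]` -/

theorem mul_cos_le_sin {w : ℝ} (h0 : 0 ≤ w) (hπ : w ≤ π) : w * cos w ≤ sin w := by
  rcases h0.eq_or_lt with rfl | h0
  · simp
  rcases lt_or_ge w (π / 2) with h | h
  · have hc : 0 < cos w := cos_pos_of_mem_Ioo ⟨by linarith, h⟩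
    have := (lt_tan h0 h).le
    rw [tan_eq_sin_div_cos, le_div_iff₀ hc] at this
    exact this
  · have := cos_nonpos_of_pi_div_two_le_of_le h (by linarith [pi_pos])
    nlinarith [sin_nonneg_of_nonneg_of_le_pi h0.le hπ]

theorem sinc_antitoneOn : AntitoneOn sinc (Set.Icc 0 π) := by
  refine antitoneOn_of_deriv_nonpos (convex_Icc _ _) continuous_sinc.continuousOn
    (contDiff_sinc.differentiable one_ne_zero).differentiableOn fun w hw => ?_
  rw [interior_Icc] at hw
  have hd : HasDerivAt (fun x => sin x / x) ((cos w * w - sin w * 1) / w ^ 2) w :=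
    (hasDerivAt_sin w).div (hasDerivAt_id w) hw.1.ne'
  have he : sinc =ᶠ[nhds w] fun x => sin x / x := by
    filter_upwards [isOpen_ne.mem_nhds hw.1.ne'] with y hy using sinc_of_ne_zero hy
  rw [(hd.congr_of_eventuallyEq he).deriv]
  have := mul_cos_le_sin hw.1.le hw.2.le
  exact div_nonpos_of_nonpos_of_nonneg (by linarith) (by positivity)

theorem sinc_pos {w : ℝ} (h0 : 0 ≤ w) (hπ : w < π) : 0 < sinc w := by
  rcases h0.eq_or_lt with rfl | h0
  · simp
  · rw [sinc_of_ne_zero h0.ne']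
    exact div_pos (sin_pos_of_pos_of_lt_pi h0 hπ) h0

/-- In the half angle `u = w / 2` the sign of the derivative is that of
`-cos u * (sin u - u * cos u)`, which is nonpositive for `w ≤ π`. -/
theorem nilG_antitoneOn : AntitoneOn nilG (Set.Icc 0 π) := by
  refine antitoneOn_of_deriv_nonpos (convex_Icc _ _) contDiff_nilG.continuous.continuousOn
    (contDiff_nilG.differentiable one_ne_zero).differentiableOn fun w hw => ?_
  rw [interior_Icc] at hw
  have hw0 := hw.1
  have hd : HasDerivAt (fun x => (sin x - x) / x ^ 2)
      (((cos w - 1) * w ^ 2 - (sin w - w) * (2 * w)) / (w ^ 2) ^ 2) w := by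
    have := ((hasDerivAt_sin w).sub (hasDerivAt_id w)).div (hasDerivAt_pow 2 w) (by positivity)
    exact this.congr_deriv (by simp)
  have he : nilG =ᶠ[nhds w] fun x => (sin x - x) / x ^ 2 := by
    filter_upwards [isOpen_ne.mem_nhds hw.1.ne'] with y hy using nilG_of_ne hy
  rw [(hd.congr_of_eventuallyEq he).deriv]
  refine div_nonpos_of_nonpos_of_nonneg ?_ (by positivity)
  obtain ⟨u, rfl⟩ : ∃ u, w = 2 * u := ⟨w / 2, by ring⟩
  have hu := mul_cos_le_sin (w := u) (by linarith) (by linarith [hw.2])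
  have hc : 0 ≤ cos u := cos_nonneg_of_mem_Icc ⟨by linarith [pi_pos], by linarith [hw.2]⟩
  have key : (cos (2 * u) - 1) * (2 * u) ^ 2 - (sin (2 * u) - 2 * u) * (2 * (2 * u)) =
      -(8 * u * (cos u * (sin u - u * cos u))) := by
    rw [cos_two_mul, sin_two_mul]
    ring
  rw [key]
  have := mul_nonneg hc (sub_nonneg.2 hu)
  have h8 : 0 ≤ 8 * u := by linarith
  linarith [mul_nonneg h8 this]

theorem nilG_nonpos {w : ℝ} (hw : w ∈ Set.Icc 0 π) : nilG w ≤ 0 := by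
  have := nilG_antitoneOn ⟨le_rfl, pi_pos.le⟩ hw hw.1
  rwa [nilG_zero] at this

/-! ### The slices of the body at fixed distance from the axis -/

theorem nilX_neg (r : ℝ) {θ : ℝ} (hθ : θ ∈ Set.Icc (-(π / 2)) (π / 2)) :
    nilX r (-θ) = nilX r θ := by
  rw [nilX_eq r hθ, nilX_eq r ⟨by linarith [hθ.2], by linarith [hθ.1]⟩, cos_neg, sin_neg,
    ← sinc_neg]
  congr 2
  ring

theorem nilZ_neg (r θ : ℝ) : nilZ r (-θ) = -nilZ r θ := by
  rw [nilZ_eq, nilZ_eq, cos_neg, sin_neg, mul_neg, nilG_neg]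
  ring

theorem mul_sin_mem {r θ : ℝ} (hr : r ∈ Set.Ioc 0 π) (hθ : θ ∈ Set.Icc 0 (π / 2)) :
    r * sin θ ∈ Set.Icc 0 π := by
  have h0 := sin_nonneg_of_nonneg_of_le_pi hθ.1 (by linarith [hθ.2, pi_pos])
  exact ⟨mul_nonneg hr.1.le h0, by nlinarith [sin_le_one θ, hr.1, hr.2]⟩

theorem nilX_nonneg {r θ : ℝ} (hr : r ∈ Set.Ioc 0 π) (hθ : θ ∈ Set.Icc (-(π / 2)) (π / 2)) :
    0 ≤ nilX r θ := by
  wlog h : 0 ≤ θ generalizing θ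
  · rw [← nilX_neg r hθ]
    exact this ⟨by linarith [hθ.2], by linarith [hθ.1]⟩ (by linarith)
  have hw := mul_sin_mem hr ⟨h, hθ.2⟩
  rw [nilX_eq r hθ]
  exact mul_nonneg (mul_nonneg hr.1.le (cos_nonneg_of_mem_Icc hθ))
    (sinc_pos (by linarith [hw.1]) (by linarith [hw.2, pi_pos])).le

theorem nilX_le {r θ : ℝ} (hr : 0 < r) (hθ : θ ∈ Set.Icc (-(π / 2)) (π / 2)) :
    nilX r θ ≤ r := by
  rw [nilX_eq r hθ, mul_assoc]
  have h1 := cos_nonneg_of_mem_Icc hθ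
  have : cos θ * sinc (r * sin θ / 2) ≤ 1 := by
    nlinarith [cos_le_one θ, sinc_le_one (r * sin θ / 2)]
  nlinarith

theorem nilX_strictAntiOn {R : ℝ} (hR : R ∈ Set.Ioc 0 π) :
    StrictAntiOn (nilX R) (Set.Icc 0 (π / 2)) := by
  intro a ha b hb hab
  have hp := pi_pos
  have ha' : a ∈ Set.Icc (-(π / 2)) (π / 2) := ⟨by linarith [ha.1], ha.2⟩
  have hb' : b ∈ Set.Icc (-(π / 2)) (π / 2) := ⟨by linarith [hb.1], hb.2⟩
  rw [nilX_eq R ha', nilX_eq R hb']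
  have hwa := mul_sin_mem hR ha
  have hwb := mul_sin_mem hR hb
  have hc : cos b < cos a := cos_lt_cos_of_nonneg_of_le_pi_div_two ha.1 hb.2 hab
  have hs : sin a ≤ sin b := sin_le_sin_of_le_of_le_pi_div_two ha'.1 hb.2 hab.le
  have hS : sinc (R * sin b / 2) ≤ sinc (R * sin a / 2) :=
    sinc_antitoneOn ⟨by linarith [hwa.1], by linarith [hwa.2]⟩
      ⟨by linarith [hwb.1], by linarith [hwb.2]⟩
      (by have := mul_le_mul_of_nonneg_left hs hR.1.le; linarith)
  have hSb : 0 < sinc (R * sin b / 2) := sinc_pos (by linarith [hwb.1]) (by linarith [hwb.2])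
  have hcb := cos_nonneg_of_mem_Icc hb'
  have hRc : R * cos b < R * cos a := mul_lt_mul_of_pos_left hc hR.1
  exact mul_lt_mul hRc hS hSb (mul_nonneg hR.1.le (hcb.trans hc.le))

/-- The height of the point at distance `ρ` from the axis whose geodesic has `r * sin θ = w`. -/
noncomputable def nilK (ρ w : ℝ) : ℝ := w - ρ ^ 2 * (nilG w / (2 * sinc (w / 2) ^ 2))

/-- The square of the parameter `r` of the point at distance `ρ` from the axis whose geodesic has
`r * sin θ = w`. -/
noncomputable def nilQ (ρ w : ℝ) : ℝ := w ^ 2 + (ρ / sinc (w / 2)) ^ 2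

theorem sinc_half_pos {w : ℝ} (hw : w ∈ Set.Icc 0 π) : 0 < sinc (w / 2) :=
  sinc_pos (by linarith [hw.1]) (by linarith [hw.2, pi_pos])

theorem sinc_half_antitone {v w : ℝ} (hv : v ∈ Set.Icc 0 π) (hw : w ∈ Set.Icc 0 π) (h : v ≤ w) :
    sinc (w / 2) ≤ sinc (v / 2) :=
  sinc_antitoneOn ⟨by linarith [hv.1], by linarith [hv.1, hv.2]⟩
      ⟨by linarith [hw.1], by linarith [hw.1, hw.2]⟩ (by linarith)

theorem nilK_monotoneOn (ρ : ℝ) : MonotoneOn (nilK ρ) (Set.Icc 0 π) := by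
  intro v hv w hw h
  have h1 := nilG_antitoneOn hv hw h
  have h2 := sinc_half_antitone hv hw h
  have h3 := sinc_half_pos hw
  have h4 := nilG_nonpos hv
  have key : -nilG v / (2 * sinc (v / 2) ^ 2) ≤ -nilG w / (2 * sinc (w / 2) ^ 2) := by
    gcongr
    linarith
  rw [neg_div, neg_div] at key
  have := mul_le_mul_of_nonneg_left key (sq_nonneg ρ)
  simp only [nilK]
  linarith

theorem nilK_continuousOn (ρ : ℝ) : ContinuousOn (nilK ρ) (Set.Icc 0 π) := by
  have h1 := contDiff_nilG.continuous
  have h2 := continuous_sinc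
  unfold nilK
  refine continuousOn_id.sub (continuousOn_const.mul (ContinuousOn.div ?_ ?_ ?_))
  · fun_prop
  · exact (by fun_prop : Continuous fun w : ℝ => 2 * sinc (w / 2) ^ 2).continuousOn
  · intro w hw
    have := sinc_half_pos hw
    positivity

theorem nilQ_strictMonoOn (ρ : ℝ) : StrictMonoOn (nilQ ρ) (Set.Icc 0 π) := by
  intro v hv w hw h
  have h2 := sinc_half_antitone hv hw h.le
  have h3 := sinc_half_pos hw
  have hv0 := hv.1
  have h4 : v ^ 2 < w ^ 2 := by gcongr
  simp only [nilQ, div_pow]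
  have : ρ ^ 2 / sinc (v / 2) ^ 2 ≤ ρ ^ 2 / sinc (w / 2) ^ 2 := by gcongr
  linarith

theorem nilZ_eq_nilK {r θ : ℝ} (hr : r ∈ Set.Ioc 0 π) (hθ : θ ∈ Set.Icc 0 (π / 2)) :
    nilZ r θ = nilK (nilX r θ) (r * sin θ) := by
  have h := (sinc_half_pos (mul_sin_mem hr hθ)).ne'
  rw [nilK, nilX_eq r ⟨by linarith [hθ.1, pi_pos], hθ.2⟩, nilZ_eq]
  field_simp

theorem nilQ_eq {r θ : ℝ} (hr : r ∈ Set.Ioc 0 π) (hθ : θ ∈ Set.Icc 0 (π / 2)) :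
    nilQ (nilX r θ) (r * sin θ) = r ^ 2 := by
  have h := (sinc_half_pos (mul_sin_mem hr hθ)).ne'
  rw [nilQ, nilX_eq r ⟨by linarith [hθ.1, pi_pos], hθ.2⟩, mul_div_cancel_right₀ _ h]
  linear_combination r ^ 2 * sin_sq_add_cos_sq θ

/-- The slice of the body (in the half plane) at distance `ρ` from the axis. -/
def nilSlice (R ρ : ℝ) : Set ℝ :=
  {z | ∃ r ∈ Set.Ioc 0 R, ∃ θ ∈ Set.Icc (-(π / 2)) (π / 2), nilX r θ = ρ ∧ z = nilZ r θ}

theorem neg_mem_nilSlice {R ρ z : ℝ} (h : z ∈ nilSlice R ρ) : -z ∈ nilSlice R ρ := by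
  obtain ⟨r, hr, θ, hθ, hX, rfl⟩ := h
  exact ⟨r, hr, -θ, ⟨by linarith [hθ.2], by linarith [hθ.1]⟩, by rw [nilX_neg r hθ, hX],
    (nilZ_neg r θ).symm⟩

/-- The intermediate value theorem produces `w` with `nilK ρ w = z`; then `r` and `θ` are read off
from `r² = nilQ ρ w` and `r * sin θ = w`. -/
theorem mem_nilSlice {R θ₀ z : ℝ} (hR : R ∈ Set.Ioc 0 π) (hθ₀ : θ₀ ∈ Set.Ioo 0 (π / 2))
    (hX : 0 < nilX R θ₀) (hz : z ∈ Set.Icc 0 (nilZ R θ₀)) : z ∈ nilSlice R (nilX R θ₀) := by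
  have hθ₀' : θ₀ ∈ Set.Icc 0 (π / 2) := ⟨hθ₀.1.le, hθ₀.2.le⟩
  have hw₀ := mul_sin_mem hR hθ₀'
  have hQ := nilQ_eq hR hθ₀'
  rw [nilZ_eq_nilK hR hθ₀'] at hz
  set ρ := nilX R θ₀ with hρ
  set w₀ := R * sin θ₀
  have hsub : Set.Icc 0 w₀ ⊆ Set.Icc 0 π := Set.Icc_subset_Icc_right hw₀.2
  have hK0 : nilK ρ 0 = 0 := by simp [nilK, nilG_zero]
  obtain ⟨w, hw, hwz⟩ := intermediate_value_Icc hw₀.1 ((nilK_continuousOn ρ).mono hsub)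
    (by rwa [hK0] : z ∈ Set.Icc (nilK ρ 0) (nilK ρ w₀))
  have hwπ := hsub hw
  have hS := sinc_half_pos hwπ
  have hpos : 0 < ρ / sinc (w / 2) := by positivity
  have hQpos : 0 < nilQ ρ w := by unfold nilQ; positivity
  have hr0 : 0 < √(nilQ ρ w) := sqrt_pos.2 hQpos
  have hrR : √(nilQ ρ w) ≤ R := by
    rw [sqrt_le_left hR.1.le, ← hQ]
    exact (nilQ_strictMonoOn ρ).monotoneOn hwπ hw₀ hw.2
  set r := √(nilQ ρ w)
  have hr2 : r ^ 2 = w ^ 2 + (ρ / sinc (w / 2)) ^ 2 := sq_sqrt hQpos.le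
  have hwr : w ≤ r := by
    apply le_sqrt_of_sq_le
    unfold nilQ
    linarith [sq_nonneg (ρ / sinc (w / 2))]
  have hsin : sin (arcsin (w / r)) = w / r :=
    sin_arcsin (by have := div_nonneg hw.1 hr0.le; linarith) ((div_le_one hr0).2 hwr)
  have hrs : r * sin (arcsin (w / r)) = w := by rw [hsin]; field_simp
  have hθ : arcsin (w / r) ∈ Set.Icc 0 (π / 2) :=
    ⟨arcsin_nonneg.2 (div_nonneg hw.1 hr0.le), arcsin_le_pi_div_two _⟩
  have hθ' := arcsin_mem_Icc (w / r)
  have hrc : r * cos (arcsin (w / r)) = ρ / sinc (w / 2) := by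
    have hc := cos_nonneg_of_mem_Icc hθ'
    refine (sq_eq_sq₀ (by positivity) hpos.le).1 ?_
    have := sin_sq_add_cos_sq (arcsin (w / r))
    have h2 : (r * sin (arcsin (w / r))) ^ 2 = w ^ 2 := by rw [hrs]
    linear_combination r ^ 2 * this - h2 + hr2
  have hXr : nilX r (arcsin (w / r)) = ρ := by
    rw [nilX_eq r hθ', hrs, hrc]
    field_simp
  have hrπ : r ∈ Set.Ioc 0 π := ⟨hr0, hrR.trans hR.2⟩
  exact ⟨r, ⟨hr0, hrR⟩, arcsin (w / r), hθ', hXr, by rw [nilZ_eq_nilK hrπ hθ, hXr, hrs, hwz]⟩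

theorem nilZ_nonneg {r θ : ℝ} (hr : r ∈ Set.Ioc 0 π) (hθ : θ ∈ Set.Icc 0 (π / 2)) :
    0 ≤ nilZ r θ := by
  have hw := mul_sin_mem hr hθ
  have hG := nilG_nonpos hw
  rw [nilZ_eq]
  nlinarith [hw.1, mul_nonneg (mul_nonneg (sq_nonneg r) (sq_nonneg (cos θ))) (neg_nonneg.2 hG)]

/-- The slice at distance `nilX R θ₀` from the axis is a symmetric segment ending on the sphere of
radius `R`: along the slice both `nilQ` (the square of `r`) and `nilK` (the height) increase with
`r * sin θ`, so the largest height is attained at `r = R`. -/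
theorem nilSlice_eq {R θ₀ : ℝ} (hR : R ∈ Set.Ioc 0 π) (hθ₀ : θ₀ ∈ Set.Ioo 0 (π / 2))
    (hX : 0 < nilX R θ₀) :
    nilSlice R (nilX R θ₀) = Set.Icc (-nilZ R θ₀) (nilZ R θ₀) := by
  have hθ₀' : θ₀ ∈ Set.Icc 0 (π / 2) := ⟨hθ₀.1.le, hθ₀.2.le⟩
  have hp := pi_pos
  have key : ∀ r ∈ Set.Ioc 0 R, ∀ θ ∈ Set.Icc 0 (π / 2), nilX r θ = nilX R θ₀ →
      nilZ r θ ≤ nilZ R θ₀ := by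
    intro r hr θ hθ h
    have hrπ : r ∈ Set.Ioc 0 π := ⟨hr.1, hr.2.trans hR.2⟩
    have hw := mul_sin_mem hrπ hθ
    have hw₀ := mul_sin_mem hR hθ₀'
    have h1 := nilQ_eq hrπ hθ
    have h2 := nilQ_eq hR hθ₀'
    rw [nilZ_eq_nilK hrπ hθ, nilZ_eq_nilK hR hθ₀', h]
    rw [h] at h1
    refine nilK_monotoneOn _ hw hw₀ ?_
    rw [← (nilQ_strictMonoOn (nilX R θ₀)).le_iff_le hw hw₀, h1, h2]
    have := hr.1
    have := hr.2
    gcongr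
  ext z
  constructor
  · rintro ⟨r, hr, θ, hθ, hXr, rfl⟩
    have hrπ : r ∈ Set.Ioc 0 π := ⟨hr.1, hr.2.trans hR.2⟩
    have hZ₀ := nilZ_nonneg hR hθ₀'
    rcases le_total 0 θ with h | h
    · have h1 := key r hr θ ⟨h, hθ.2⟩ hXr
      have h2 := nilZ_nonneg hrπ ⟨h, hθ.2⟩
      exact ⟨by linarith, h1⟩
    · have h' : -θ ∈ Set.Icc 0 (π / 2) := ⟨by linarith, by linarith [hθ.1]⟩
      have h1 := key r hr (-θ) h' (by rw [nilX_neg r hθ, hXr])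
      have h2 := nilZ_nonneg hrπ h'
      rw [nilZ_neg] at h1 h2
      exact ⟨by linarith, by linarith⟩
  · intro hz
    rcases le_total 0 z with h | h
    · exact mem_nilSlice hR hθ₀ hX ⟨h, hz.2⟩
    · have := neg_mem_nilSlice
        (mem_nilSlice hR hθ₀ hX (z := -z) ⟨by linarith, by linarith [hz.1]⟩)
      rwa [neg_neg] at this

/-! ### Measurability and integration -/

/-- The map parametrising the body, in a form that is visibly continuous. -/
noncomputable def nilParam (q : ℝ × ℝ × ℝ) : ℝ × ℝ × ℝ :=
  (q.1 * cos q.2.1 * sinc (q.1 * sin q.2.1 / 2) * cos q.2.2,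
    q.1 * cos q.2.1 * sinc (q.1 * sin q.2.1 / 2) * sin q.2.2,
    q.1 * sin q.2.1 - q.1 ^ 2 * cos q.2.1 ^ 2 * nilG (q.1 * sin q.2.1) / 2)

theorem nilParam_eq (r φ : ℝ) {θ : ℝ} (hθ : θ ∈ Set.Icc (-(π / 2)) (π / 2)) :
    nilParam (r, θ, φ) = (nilX r θ * cos φ, nilX r θ * sin φ, nilZ r θ) := by
  rw [nilParam, nilX_eq r hθ, nilZ_eq]

theorem nilBall'_eq_image {R : ℝ} (hR : 0 < R) :
    nilBall' R = nilParam ''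
      (Set.Icc 0 R ×ˢ Set.Icc (-(π / 2)) (π / 2) ×ˢ Set.Icc (-π) π) := by
  have hp := pi_pos
  ext p
  constructor
  · rintro (rfl | ⟨r, hr, θ, hθ, φ, hφ, rfl⟩)
    · refine ⟨(0, 0, 0), ⟨⟨le_rfl, hR.le⟩, ⟨by linarith, by linarith⟩, by linarith, hp.le⟩, ?_⟩
      simp [nilParam]
    · exact ⟨(r, θ, φ), ⟨⟨hr.1.le, hr.2⟩, hθ, ⟨hφ.1.le, hφ.2⟩⟩, nilParam_eq r φ hθ⟩
  · rintro ⟨⟨r, θ, φ⟩, ⟨hr, hθ, hφ⟩, rfl⟩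
    rcases hr.1.eq_or_lt with h | h
    · simp only at h
      subst h
      left
      simp [nilParam]
    right
    rcases hφ.1.eq_or_lt with h' | h'
    · refine ⟨r, ⟨h, hr.2⟩, θ, hθ, π, ⟨by linarith, le_rfl⟩, ?_⟩
      simp only at h'
      rw [nilParam_eq r φ hθ, ← h', cos_neg, sin_neg]
      simp
    · exact ⟨r, ⟨h, hr.2⟩, θ, hθ, φ, ⟨h', hφ.2⟩, nilParam_eq r φ hθ⟩

theorem measurableSet_nilBall' {R : ℝ} (hR : 0 < R) : MeasurableSet (nilBall' R) := by
  rw [nilBall'_eq_image hR]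
  refine (IsCompact.image (isCompact_Icc.prod (isCompact_Icc.prod isCompact_Icc)) ?_).measurableSet
  have h1 := contDiff_nilG.continuous
  have h2 := continuous_sinc
  unfold nilParam
  fun_prop

theorem mem_nilBall'_iff {R ρ φ z : ℝ} (hR : R ∈ Set.Ioc 0 π) (hρ : 0 < ρ)
    (hφ : φ ∈ Set.Ioc (-π) π) :
    (ρ * cos φ, ρ * sin φ, z) ∈ nilBall' R ↔ z ∈ nilSlice R ρ := by
  constructor
  · rintro (h | ⟨r, hr, θ, hθ, ψ, hψ, h⟩)
    · simp only [Prod.mk.injEq] at h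
      exfalso
      have := sin_sq_add_cos_sq φ
      rcases h with ⟨h1, h2, -⟩
      have h1' := (mul_eq_zero.1 h1).resolve_left hρ.ne'
      have h2' := (mul_eq_zero.1 h2).resolve_left hρ.ne'
      rw [h1', h2'] at this
      norm_num at this
    · simp only [Prod.mk.injEq] at h
      rcases h with ⟨h1, h2, h3⟩
      refine ⟨r, hr, θ, hθ, ?_, h3⟩
      refine (sq_eq_sq₀ (nilX_nonneg ⟨hr.1, hr.2.trans hR.2⟩ hθ) hρ.le).1 ?_
      have e1 : (ρ * cos φ) ^ 2 = (nilX r θ * cos ψ) ^ 2 := by rw [h1]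
      have e2 : (ρ * sin φ) ^ 2 = (nilX r θ * sin ψ) ^ 2 := by rw [h2]
      linear_combination ρ ^ 2 * sin_sq_add_cos_sq φ -
        nilX r θ ^ 2 * sin_sq_add_cos_sq ψ - e1 - e2
  · rintro ⟨r, hr, θ, hθ, rfl, rfl⟩
    exact Or.inr ⟨r, hr, θ, hθ, φ, hφ, rfl⟩

open MeasureTheory

/-- The volume in cylindrical coordinates; the slice does not depend on the polar angle. -/
theorem volume_eq_lintegral_slice {R : ℝ} (hR : R ∈ Set.Ioc 0 π) :
    volume (nilBall' R) =
      ENNReal.ofReal (2 * π) *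
        ∫⁻ ρ in Set.Ioi 0, ENNReal.ofReal ρ * volume (nilSlice R ρ) := by
  have hm := measurableSet_nilBall' hR.1
  have hpre : MeasurableSet (MeasurableEquiv.prodAssoc ⁻¹' nilBall' R : Set ((ℝ × ℝ) × ℝ)) :=
    MeasurableEquiv.prodAssoc.measurable hm
  have hf := measurable_measure_prodMk_left (ν := (volume : Measure ℝ)) hpre
  rw [← (volume_preserving_prodAssoc (α₁ := ℝ) (β₁ := ℝ) (γ₁ := ℝ)).measure_preimage
    hm.nullMeasurableSet, Measure.volume_eq_prod (ℝ × ℝ) ℝ, Measure.prod_apply hpre,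
    ← lintegral_comp_polarCoord_symm]
  have htar : polarCoord.target = Set.Ioi (0 : ℝ) ×ˢ Set.Ioo (-π) π := rfl
  rw [htar, Measure.volume_eq_prod, setLIntegral_prod]
  · rw [← lintegral_const_mul' _ _ ENNReal.ofReal_ne_top]
    refine setLIntegral_congr_fun measurableSet_Ioi fun ρ hρ => ?_
    calc _ = ∫⁻ φ in Set.Ioo (-π) π, ENNReal.ofReal ρ * volume (nilSlice R ρ) := by
          refine setLIntegral_congr_fun measurableSet_Ioo fun φ hφ => ?_
          simp only [smul_eq_mul]
          congr 2
          ext z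
          exact mem_nilBall'_iff hR hρ ⟨hφ.1, hφ.2.le⟩
      _ = _ := by
          rw [setLIntegral_const, Real.volume_Ioo, mul_comm]
          congr 2
          ring
  · refine Measurable.aemeasurable ?_
    simp only [smul_eq_mul]
    exact (ENNReal.measurable_ofReal.comp measurable_fst).mul
      (hf.comp continuous_polarCoord_symm.measurable)

theorem nilSlice_eq_empty {R ρ : ℝ} (h : R < ρ) : nilSlice R ρ = ∅ := by
  refine Set.eq_empty_of_forall_notMem ?_
  rintro z ⟨r, hr, θ, hθ, rfl, -⟩
  linarith [nilX_le hr.1 hθ, hr.2]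

/-- A globally smooth function agreeing with `nilX R` on `[-π / 2, π / 2]`. -/
noncomputable def nilXs (R θ : ℝ) : ℝ := R * cos θ * sinc (R * sin θ / 2)

theorem contDiff_nilXs (R : ℝ) : ContDiff ℝ 1 (nilXs R) := by
  have h := contDiff_sinc
  have := contDiff_sin.of_le (m := 1) le_top
  have := contDiff_cos.of_le (m := 1) le_top
  unfold nilXs
  fun_prop

theorem contDiff_nilZ (R : ℝ) : ContDiff ℝ 1 (nilZ R) := by
  have h := contDiff_nilG
  have e : nilZ R = fun θ => R * sin θ - R ^ 2 * cos θ ^ 2 * nilG (R * sin θ) / 2 :=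
    funext (nilZ_eq R)
  rw [e]
  fun_prop

theorem nilXs_eq (R : ℝ) {θ : ℝ} (hθ : θ ∈ Set.Icc 0 (π / 2)) : nilXs R θ = nilX R θ :=
  (nilX_eq R ⟨by linarith [hθ.1, pi_pos], hθ.2⟩).symm

theorem nilXs_strictAntiOn {R : ℝ} (hR : R ∈ Set.Ioc 0 π) :
    StrictAntiOn (nilXs R) (Set.Icc 0 (π / 2)) :=
  (nilX_strictAntiOn hR).congr fun _ hθ => (nilXs_eq R hθ).symm

theorem nilXs_image {R : ℝ} (hR : R ∈ Set.Ioc 0 π) :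
    nilXs R '' Set.Ioo 0 (π / 2) = Set.Ioo 0 R := by
  have hp : (0 : ℝ) ≤ π / 2 := by linarith [pi_pos]
  have h0 : nilXs R 0 = R := by simp [nilXs]
  have h1 : nilXs R (π / 2) = 0 := by simp [nilXs]
  apply Set.Subset.antisymm
  · rintro _ ⟨θ, hθ, rfl⟩
    have ha := nilXs_strictAntiOn hR (Set.left_mem_Icc.2 hp) ⟨hθ.1.le, hθ.2.le⟩ hθ.1
    have hb := nilXs_strictAntiOn hR ⟨hθ.1.le, hθ.2.le⟩ (Set.right_mem_Icc.2 hp) hθ.2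
    rw [h0] at ha
    rw [h1] at hb
    exact ⟨hb, ha⟩
  · have := intermediate_value_Ioo' hp (contDiff_nilXs R).continuous.continuousOn
    rwa [h0, h1] at this

theorem deriv_nilXs_nonpos {R θ : ℝ} (hR : R ∈ Set.Ioc 0 π) (hθ : θ ∈ Set.Ioo 0 (π / 2)) :
    deriv (nilXs R) θ ≤ 0 := by
  have h := (nilXs_strictAntiOn hR).antitoneOn.derivWithin_nonpos (x := θ)
  rwa [derivWithin_of_mem_nhds (Icc_mem_nhds hθ.1 hθ.2)] at h

/-- The substitution `ρ = X(R, θ)`, which maps `(0, π / 2)` decreasingly onto `(0, R)`. -/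
theorem lintegral_slice_eq {R : ℝ} (hR : R ∈ Set.Ioc 0 π) :
    ∫⁻ ρ in Set.Ioi 0, ENNReal.ofReal ρ * volume (nilSlice R ρ) =
      ENNReal.ofReal (∫ θ in (0 : ℝ)..(π / 2),
        -(2 * nilXs R θ * deriv (nilXs R) θ) * nilZ R θ) := by
  have hp : (0 : ℝ) ≤ π / 2 := by linarith [pi_pos]
  have hcX := (contDiff_nilXs R).continuous
  have hcX' := (contDiff_nilXs R).continuous_deriv le_rfl
  have hcZ := (contDiff_nilZ R).continuous
  have hpos : ∀ θ ∈ Set.Ioo 0 (π / 2), 0 < nilXs R θ := fun θ hθ =>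
    ((nilXs_image hR).subset (Set.mem_image_of_mem _ hθ)).1
  have hunion : Set.Ioi (0 : ℝ) = Set.Ioo 0 R ∪ Set.Ici R := (Set.Ioo_union_Ici_eq_Ioi hR.1).symm
  have hzero : ∫⁻ ρ in Set.Ici R, ENNReal.ofReal ρ * volume (nilSlice R ρ) = 0 := by
    rw [setLIntegral_congr Ioi_ae_eq_Ici.symm]
    refine (setLIntegral_congr_fun measurableSet_Ioi fun ρ hρ => ?_).trans lintegral_zero
    simp [nilSlice_eq_empty hρ]
  rw [hunion, lintegral_union measurableSet_Ici
    (Set.disjoint_left.2 fun x hx hx' => (hx.2.trans_le hx').false), hzero, add_zero,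
    ← nilXs_image hR, lintegral_image_eq_lintegral_abs_deriv_mul measurableSet_Ioo
      (fun θ _ => (((contDiff_nilXs R).differentiable one_ne_zero) θ).hasDerivAt.hasDerivWithinAt)
      ((nilXs_strictAntiOn hR).injOn.mono Set.Ioo_subset_Icc_self),
    intervalIntegral.integral_of_le hp, ← setIntegral_congr_set Ioo_ae_eq_Ioc,
    ofReal_integral_eq_lintegral_ofReal]
  · refine setLIntegral_congr_fun measurableSet_Ioo fun θ hθ => ?_
    have hθ' : θ ∈ Set.Icc 0 (π / 2) := ⟨hθ.1.le, hθ.2.le⟩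
    have h1 := hpos θ hθ
    have h2 := deriv_nilXs_nonpos hR hθ
    rw [nilXs_eq R hθ', nilSlice_eq hR hθ (by rwa [← nilXs_eq R hθ']), ← nilXs_eq R hθ',
      Real.volume_Icc, ← ENNReal.ofReal_mul h1.le, ← ENNReal.ofReal_mul (abs_nonneg _),
      abs_of_nonpos h2]
    congr 1
    ring
  · exact ((by fun_prop : Continuous fun θ => -(2 * nilXs R θ * deriv (nilXs R) θ) *
      nilZ R θ).continuousOn.integrableOn_compact isCompact_Icc).mono_set Set.Ioo_subset_Icc_self
  · filter_upwards [ae_restrict_mem measurableSet_Ioo] with θ hθ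
    have h1 := hpos θ hθ
    have h2 := deriv_nilXs_nonpos hR hθ
    have h3 := nilZ_nonneg hR ⟨hθ.1.le, hθ.2.le⟩
    have h4 := mul_nonpos_of_nonneg_of_nonpos h1.le h2
    exact mul_nonneg (by linarith) h3

/-- The boundary terms vanish since `X(R, π / 2) = 0` and `Z(R, 0) = 0`. -/
theorem integral_by_parts (R : ℝ) :
    ∫ θ in (0 : ℝ)..(π / 2), nilXs R θ ^ 2 * deriv (nilZ R) θ =
      ∫ θ in (0 : ℝ)..(π / 2), -(2 * nilXs R θ * deriv (nilXs R) θ) * nilZ R θ := by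
  have hcX := (contDiff_nilXs R).continuous
  have hcX' := (contDiff_nilXs R).continuous_deriv le_rfl
  have hcZ' := (contDiff_nilZ R).continuous_deriv le_rfl
  have hdX : ∀ θ, HasDerivAt (fun t => nilXs R t ^ 2) (2 * nilXs R θ * deriv (nilXs R) θ) θ := by
    intro θ
    have := (((contDiff_nilXs R).differentiable one_ne_zero) θ).hasDerivAt.fun_pow 2
    exact this.congr_deriv (by simp)
  rw [intervalIntegral.integral_mul_deriv_eq_deriv_mul (fun θ _ => hdX θ)
    (fun θ _ => (((contDiff_nilZ R).differentiable one_ne_zero) θ).hasDerivAt)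
    ((by fun_prop : Continuous fun θ => 2 * nilXs R θ * deriv (nilXs R) θ).intervalIntegrable _ _)
    (hcZ'.intervalIntegrable _ _)]
  have h1 : nilXs R (π / 2) = 0 := by simp [nilXs]
  have h0 : nilZ R 0 = 0 := by simp [nilZ]
  rw [h1, h0]
  simp [intervalIntegral.integral_neg]

/-- The Lebesgue volume of the rotational body `B'(R)` (hence also of the Nil
geodesic ball of radius `R`) equals `2π ∫₀^{π/2} X(R,θ)² ∂Z/∂θ(R,θ) dθ`. -/
theorem volume_nilBall' (R : ℝ) (hR : R ∈ Set.Ioc 0 π) :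
    MeasureTheory.volume (nilBall' R) =
      ENNReal.ofReal
        (2 * π * ∫ θ in (0 : ℝ)..(π / 2),
          nilX R θ ^ 2 * deriv (fun t => nilZ R t) θ) := by
  have hp := pi_pos
  have h : ∫ θ in (0 : ℝ)..(π / 2), nilX R θ ^ 2 * deriv (fun t => nilZ R t) θ =
      ∫ θ in (0 : ℝ)..(π / 2), nilXs R θ ^ 2 * deriv (nilZ R) θ := by
    refine intervalIntegral.integral_congr fun θ hθ => ?_
    rw [Set.uIcc_of_le (by linarith)] at hθ
    simp only [nilXs_eq R hθ]
  rw [volume_eq_lintegral_slice hR, lintegral_slice_eq hR, h, integral_by_parts,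
    ← ENNReal.ofReal_mul (by positivity)]
end

section
/- For every R ∈ [π/2, π], one has V(R)/(4R²) > 1.43093459, where V(R) = 2π ∫₀^{π/2} X(R, θ)² · (∂Z/∂θ)(R, θ) dθ. -/
/-!
In the variable `s = sin θ`, with `u = R s`, the integrand `X² ∂Z/∂θ` on `(0, π/2]` equals
`cos θ · (1 - s²) · N / s⁵`, where
`N = 2 sin u - sin 2u - (u / 2) (1 - s²) (1 - cos 2u)` (`integrand_eq`).
Alternating Taylor bounds for `sin` and `cos`, valid on all of `[0, ∞)`, bound `N / s⁵` below by
`R³ (α - β s² - γ s⁴)` with `α = 1 + R²/12`, `β = R²/3 + 7 R⁴/360`, `γ = 4 R⁶/2835`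
(`num_lower`), and above by a constant (`num_upper`). The upper bound gives integrability. The
lower bound integrates in closed form and yields
`V(R) / (4 R²) ≥ (π/2) R (2/3 + R²/90 - 7 R⁴/2700 - 8 R⁶/99225)`,
which exceeds the required constant with a wide margin on `[π/2, π]` (`final_poly`).
-/

open Real

/-- The volume of the Nil geodesic ball of radius `R`. -/
noncomputable def nilBallVol (R : ℝ) : ℝ :=
  2 * π * ∫ θ in (0 : ℝ)..(π / 2), nilX R θ ^ 2 * deriv (fun t => nilZ R t) θ

/-! ### Taylor bounds for sine and cosine on the nonnegative reals -/

/-- Integrating `f' ≤ g'` from `0`; it raises a Taylor bound for `sin` or `cos` by one degree. -/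
lemma le_of_deriv_le {f g f' g' : ℝ → ℝ} (hf : ∀ x, HasDerivAt f (f' x) x)
    (hg : ∀ x, HasDerivAt g (g' x) x) (h0 : f 0 = g 0) (h : ∀ x, 0 ≤ x → f' x ≤ g' x)
    (x : ℝ) (hx : 0 ≤ x) : f x ≤ g x := by
  have hm : MonotoneOn (fun y => g y - f y) (Set.Ici 0) := by
    apply monotoneOn_of_hasDerivWithinAt_nonneg (convex_Ici 0) (f' := fun y => g' y - f' y)
    · exact fun y _ => ((hg y).sub (hf y)).continuousAt.continuousWithinAt
    · exact fun y _ => ((hg y).sub (hf y)).hasDerivWithinAt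
    · intro y hy
      rw [interior_Ici] at hy
      exact sub_nonneg.2 (h y (le_of_lt hy))
  have h1 := hm (Set.mem_Ici.2 le_rfl) (Set.mem_Ici.2 hx) hx
  simp only [h0, sub_self] at h1
  linarith

lemma sin_le_taylor1 (x : ℝ) (hx : 0 ≤ x) : sin x ≤ x := by
  have hp : ∀ y, HasDerivAt (fun x : ℝ => x) ((fun x : ℝ => 1) y) y := fun y => by
    refine HasDerivAt.congr_deriv (hasDerivAt_id y) ?_
    norm_num; try ring
  exact le_of_deriv_le (f := fun x => sin x) (g := fun x : ℝ => x)
    (f' := fun x => cos x) (g' := fun x : ℝ => 1) (fun y => hasDerivAt_sin y) hp (by simp)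
    (fun y _ => cos_le_one y) x hx

lemma taylor2_le_cos (x : ℝ) (hx : 0 ≤ x) : 1 - x ^ 2 / 2 ≤ cos x := by
  have hp : ∀ y, HasDerivAt (fun x : ℝ => 1 - x ^ 2 / 2) ((fun x : ℝ => -(x)) y) y := fun y => by
    refine HasDerivAt.congr_deriv ((hasDerivAt_const y (1 : ℝ)).sub ((hasDerivAt_pow 2 y).div_const 2)) ?_
    norm_num; try ring
  exact le_of_deriv_le (f := fun x : ℝ => 1 - x ^ 2 / 2) (g := fun x => cos x)
    (f' := fun x : ℝ => -(x)) (g' := fun x => -sin x) hp (fun y => hasDerivAt_cos y) (by simp)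
    (fun y hy => neg_le_neg (sin_le_taylor1 y hy)) x hx

lemma taylor3_le_sin (x : ℝ) (hx : 0 ≤ x) : x - x ^ 3 / 6 ≤ sin x := by
  have hp : ∀ y, HasDerivAt (fun x : ℝ => x - x ^ 3 / 6) ((fun x : ℝ => 1 - x ^ 2 / 2) y) y := fun y => by
    refine HasDerivAt.congr_deriv ((hasDerivAt_id y).sub ((hasDerivAt_pow 3 y).div_const 6)) ?_
    norm_num; try ring
  exact le_of_deriv_le (f := fun x : ℝ => x - x ^ 3 / 6) (g := fun x => sin x)
    (f' := fun x : ℝ => 1 - x ^ 2 / 2) (g' := fun x => cos x) hp (fun y => hasDerivAt_sin y) (by simp)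
    (fun y hy => taylor2_le_cos y hy) x hx

lemma cos_le_taylor4 (x : ℝ) (hx : 0 ≤ x) : cos x ≤ 1 - x ^ 2 / 2 + x ^ 4 / 24 := by
  have hp : ∀ y, HasDerivAt (fun x : ℝ => 1 - x ^ 2 / 2 + x ^ 4 / 24) ((fun x : ℝ => -(x - x ^ 3 / 6)) y) y := fun y => by
    refine HasDerivAt.congr_deriv (((hasDerivAt_const y (1 : ℝ)).sub ((hasDerivAt_pow 2 y).div_const 2)).add ((hasDerivAt_pow 4 y).div_const 24)) ?_
    norm_num; try ring
  exact le_of_deriv_le (f := fun x => cos x) (g := fun x : ℝ => 1 - x ^ 2 / 2 + x ^ 4 / 24)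
    (f' := fun x => -sin x) (g' := fun x : ℝ => -(x - x ^ 3 / 6)) (fun y => hasDerivAt_cos y) hp (by simp)
    (fun y hy => neg_le_neg (taylor3_le_sin y hy)) x hx

lemma sin_le_taylor5 (x : ℝ) (hx : 0 ≤ x) : sin x ≤ x - x ^ 3 / 6 + x ^ 5 / 120 := by
  have hp : ∀ y, HasDerivAt (fun x : ℝ => x - x ^ 3 / 6 + x ^ 5 / 120) ((fun x : ℝ => 1 - x ^ 2 / 2 + x ^ 4 / 24) y) y := fun y => by
    refine HasDerivAt.congr_deriv (((hasDerivAt_id y).sub ((hasDerivAt_pow 3 y).div_const 6)).add ((hasDerivAt_pow 5 y).div_const 120)) ?_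
    norm_num; try ring
  exact le_of_deriv_le (f := fun x => sin x) (g := fun x : ℝ => x - x ^ 3 / 6 + x ^ 5 / 120)
    (f' := fun x => cos x) (g' := fun x : ℝ => 1 - x ^ 2 / 2 + x ^ 4 / 24) (fun y => hasDerivAt_sin y) hp (by simp)
    (fun y hy => cos_le_taylor4 y hy) x hx

lemma taylor6_le_cos (x : ℝ) (hx : 0 ≤ x) : 1 - x ^ 2 / 2 + x ^ 4 / 24 - x ^ 6 / 720 ≤ cos x := by
  have hp : ∀ y, HasDerivAt (fun x : ℝ => 1 - x ^ 2 / 2 + x ^ 4 / 24 - x ^ 6 / 720) ((fun x : ℝ => -(x - x ^ 3 / 6 + x ^ 5 / 120)) y) y := fun y => by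
    refine HasDerivAt.congr_deriv ((((hasDerivAt_const y (1 : ℝ)).sub ((hasDerivAt_pow 2 y).div_const 2)).add ((hasDerivAt_pow 4 y).div_const 24)).sub ((hasDerivAt_pow 6 y).div_const 720)) ?_
    norm_num; try ring
  exact le_of_deriv_le (f := fun x : ℝ => 1 - x ^ 2 / 2 + x ^ 4 / 24 - x ^ 6 / 720) (g := fun x => cos x)
    (f' := fun x : ℝ => -(x - x ^ 3 / 6 + x ^ 5 / 120)) (g' := fun x => -sin x) hp (fun y => hasDerivAt_cos y) (by simp)
    (fun y hy => neg_le_neg (sin_le_taylor5 y hy)) x hx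

lemma taylor7_le_sin (x : ℝ) (hx : 0 ≤ x) : x - x ^ 3 / 6 + x ^ 5 / 120 - x ^ 7 / 5040 ≤ sin x := by
  have hp : ∀ y, HasDerivAt (fun x : ℝ => x - x ^ 3 / 6 + x ^ 5 / 120 - x ^ 7 / 5040) ((fun x : ℝ => 1 - x ^ 2 / 2 + x ^ 4 / 24 - x ^ 6 / 720) y) y := fun y => by
    refine HasDerivAt.congr_deriv ((((hasDerivAt_id y).sub ((hasDerivAt_pow 3 y).div_const 6)).add ((hasDerivAt_pow 5 y).div_const 120)).sub ((hasDerivAt_pow 7 y).div_const 5040)) ?_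
    norm_num; try ring
  exact le_of_deriv_le (f := fun x : ℝ => x - x ^ 3 / 6 + x ^ 5 / 120 - x ^ 7 / 5040) (g := fun x => sin x)
    (f' := fun x : ℝ => 1 - x ^ 2 / 2 + x ^ 4 / 24 - x ^ 6 / 720) (g' := fun x => cos x) hp (fun y => hasDerivAt_sin y) (by simp)
    (fun y hy => taylor6_le_cos y hy) x hx

lemma cos_le_taylor8 (x : ℝ) (hx : 0 ≤ x) : cos x ≤ 1 - x ^ 2 / 2 + x ^ 4 / 24 - x ^ 6 / 720 + x ^ 8 / 40320 := by
  have hp : ∀ y, HasDerivAt (fun x : ℝ => 1 - x ^ 2 / 2 + x ^ 4 / 24 - x ^ 6 / 720 + x ^ 8 / 40320) ((fun x : ℝ => -(x - x ^ 3 / 6 + x ^ 5 / 120 - x ^ 7 / 5040)) y) y := fun y => by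
    refine HasDerivAt.congr_deriv (((((hasDerivAt_const y (1 : ℝ)).sub ((hasDerivAt_pow 2 y).div_const 2)).add ((hasDerivAt_pow 4 y).div_const 24)).sub ((hasDerivAt_pow 6 y).div_const 720)).add ((hasDerivAt_pow 8 y).div_const 40320)) ?_
    norm_num; try ring
  exact le_of_deriv_le (f := fun x => cos x) (g := fun x : ℝ => 1 - x ^ 2 / 2 + x ^ 4 / 24 - x ^ 6 / 720 + x ^ 8 / 40320)
    (f' := fun x => -sin x) (g' := fun x : ℝ => -(x - x ^ 3 / 6 + x ^ 5 / 120 - x ^ 7 / 5040)) (fun y => hasDerivAt_cos y) hp (by simp)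
    (fun y hy => neg_le_neg (taylor7_le_sin y hy)) x hx

lemma sin_le_taylor9 (x : ℝ) (hx : 0 ≤ x) : sin x ≤ x - x ^ 3 / 6 + x ^ 5 / 120 - x ^ 7 / 5040 + x ^ 9 / 362880 := by
  have hp : ∀ y, HasDerivAt (fun x : ℝ => x - x ^ 3 / 6 + x ^ 5 / 120 - x ^ 7 / 5040 + x ^ 9 / 362880) ((fun x : ℝ => 1 - x ^ 2 / 2 + x ^ 4 / 24 - x ^ 6 / 720 + x ^ 8 / 40320) y) y := fun y => by
    refine HasDerivAt.congr_deriv (((((hasDerivAt_id y).sub ((hasDerivAt_pow 3 y).div_const 6)).add ((hasDerivAt_pow 5 y).div_const 120)).sub ((hasDerivAt_pow 7 y).div_const 5040)).add ((hasDerivAt_pow 9 y).div_const 362880)) ?_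
    norm_num; try ring
  exact le_of_deriv_le (f := fun x => sin x) (g := fun x : ℝ => x - x ^ 3 / 6 + x ^ 5 / 120 - x ^ 7 / 5040 + x ^ 9 / 362880)
    (f' := fun x => cos x) (g' := fun x : ℝ => 1 - x ^ 2 / 2 + x ^ 4 / 24 - x ^ 6 / 720 + x ^ 8 / 40320) (fun y => hasDerivAt_sin y) hp (by simp)
    (fun y hy => cos_le_taylor8 y hy) x hx

/-! ### Polynomial bounds for the integrand -/

/-- The terms of order below `s⁵` in the Taylor bounds cancel, so the numerator of `integrand_eq`
is bounded below by a multiple of `s⁵`. -/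
lemma num_lower (r s : ℝ) (hr : 0 ≤ r) (hs : 0 ≤ s) (hs1 : s ≤ 1) :
    s ^ 5 * (r ^ 3 * ((1 + r ^ 2 / 12) - (r ^ 2 / 3 + 7 * r ^ 4 / 360) * s ^ 2
        - 4 * r ^ 6 / 2835 * s ^ 4)) ≤
      2 * sin (r * s) - sin (2 * (r * s)) -
        r * s / 2 * (1 - s ^ 2) * (1 - cos (2 * (r * s))) := by
  have hu : 0 ≤ r * s := mul_nonneg hr hs
  have h1 := taylor7_le_sin (r * s) hu
  have h2 := sin_le_taylor9 (2 * (r * s)) (by positivity)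
  have h3 := taylor6_le_cos (2 * (r * s)) (by positivity)
  have hw : 0 ≤ r * s / 2 * (1 - s ^ 2) := by
    have : 0 ≤ 1 - s ^ 2 := by nlinarith
    positivity
  have h4 := mul_le_mul_of_nonneg_left h3 hw
  have h5 : 0 ≤ 2 / 45 * (r ^ 7 * s ^ 9) := by positivity
  linarith

lemma num_upper (r s : ℝ) (hr : 0 ≤ r) (hs : 0 ≤ s) (hs1 : s ≤ 1) :
    2 * sin (r * s) - sin (2 * (r * s)) -
        r * s / 2 * (1 - s ^ 2) * (1 - cos (2 * (r * s))) ≤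
      s ^ 5 * (r ^ 3 + r ^ 5 / 12 + 8 * r ^ 7 / 315) := by
  have hu : 0 ≤ r * s := mul_nonneg hr hs
  have h1 := sin_le_taylor5 (r * s) hu
  have h2 := taylor7_le_sin (2 * (r * s)) (by positivity)
  have h3 := cos_le_taylor4 (2 * (r * s)) (by positivity)
  have hw : 0 ≤ r * s / 2 * (1 - s ^ 2) := by
    have : 0 ≤ 1 - s ^ 2 := by nlinarith
    positivity
  have h4 := mul_le_mul_of_nonneg_left h3 hw
  have h5 : 0 ≤ 1 / 3 * (r ^ 5 * s ^ 7) := by positivity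
  have h6 : r ^ 7 * s ^ 7 ≤ r ^ 7 * s ^ 5 :=
    mul_le_mul_of_nonneg_left (pow_le_pow_of_le_one hs hs1 (by norm_num)) (by positivity)
  linarith

lemma hasDerivAt_nilZ (r θ : ℝ) (hθ : 0 < sin θ) :
    HasDerivAt (fun t => nilZ r t)
      ((r / 2 - r / (2 * sin θ ^ 2) + sin (r * sin θ) / sin θ ^ 3
        - (1 / (2 * sin θ ^ 2) - 1 / 2) * (r * cos (r * sin θ))) * cos θ) θ := by
  have key : ∀ s : ℝ, s ≠ 0 → HasDerivAt
      (fun s : ℝ => r * s / 2 + r / 2 * s⁻¹ - ((s ^ 2)⁻¹ / 2 - 1 / 2) * sin (r * s))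
      (r / 2 - r / (2 * s ^ 2) + sin (r * s) / s ^ 3
        - (1 / (2 * s ^ 2) - 1 / 2) * (r * cos (r * s))) s := by
    intro s hs
    have h1 := ((hasDerivAt_id s).const_mul r)
    have h2 := h1.sin
    have h3 := (hasDerivAt_inv hs).const_mul (r / 2)
    have h4 := (((hasDerivAt_pow 2 s).fun_inv (pow_ne_zero 2 hs)).div_const 2).sub_const (1 / 2)
    refine (((h1.div_const 2).add h3).sub (h4.mul h2)).congr_deriv ?_
    simp only [id]
    field_simp
    ring
  have h := (key (sin θ) hθ.ne').comp θ (hasDerivAt_sin θ)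
  refine h.congr_of_eventuallyEq ?_
  filter_upwards [continuous_sin.continuousAt.eventually_ne hθ.ne'] with t ht
  have ht0 : t ≠ 0 := by
    rintro rfl
    simp at ht
  simp only [nilZ, if_neg ht0, Function.comp, cos_sq']
  field_simp
  ring

lemma integrand_eq (r θ : ℝ) (hs : 0 < sin θ) :
    nilX r θ ^ 2 * deriv (fun t => nilZ r t) θ =
      cos θ ^ 3 * ((2 * sin (r * sin θ) - sin (2 * (r * sin θ)) -
        r * sin θ / 2 * (1 - sin θ ^ 2) * (1 - cos (2 * (r * sin θ)))) / sin θ ^ 5) := by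
  have hθ : θ ≠ 0 := by
    rintro rfl
    simp at hs
  rw [(hasDerivAt_nilZ r θ hs).deriv]
  simp only [nilX, if_neg hθ]
  have h1 : sin (r * sin θ / 2) ^ 2 = (1 - cos (r * sin θ)) / 2 := by
    rw [sin_sq_eq_half_sub]
    ring_nf
  have h2 : sin (r * sin θ) ^ 2 = 1 - cos (r * sin θ) ^ 2 := sin_sq _
  rw [mul_pow, h1, sin_two_mul, cos_two_mul]
  generalize sin (r * sin θ) = a at *
  generalize cos (r * sin θ) = b at *
  generalize sin θ = s at *
  field_simp
  ring

/-! ### The polynomial inequality in the radius -/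

/-- The constant `0.9115` exceeds `2 c / 3.14` for `c = 1.43093459`, so this inequality together
with `π > 3.14` gives the claimed bound `c`. -/
lemma final_poly (r : ℝ) (h1 : 1.57 ≤ r) (h2 : r ≤ 3.142) :
    0.9115 < r * (2 / 3 + r ^ 2 / 90 - 7 * r ^ 4 / 2700 - 8 * r ^ 6 / 99225) := by
  -- On each piece, the negative terms are estimated at the right endpoint, the others at the left.
  have main : ∀ a b : ℝ, 0 < a → a ≤ r → r ≤ b →
      0.9115 < a * (2 / 3 + a ^ 2 / 90 - 7 * b ^ 4 / 2700 - 8 * b ^ 6 / 99225) →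
      0.9115 < r * (2 / 3 + r ^ 2 / 90 - 7 * r ^ 4 / 2700 - 8 * r ^ 6 / 99225) := by
    intro a b ha har hrb h
    have h2 : a ^ 2 ≤ r ^ 2 := by gcongr
    have h4 : r ^ 4 ≤ b ^ 4 := by gcongr
    have h6 : r ^ 6 ≤ b ^ 6 := by gcongr
    have hk : 2 / 3 + a ^ 2 / 90 - 7 * b ^ 4 / 2700 - 8 * b ^ 6 / 99225 ≤
      2 / 3 + r ^ 2 / 90 - 7 * r ^ 4 / 2700 - 8 * r ^ 6 / 99225 := by linarith
    have hpos : 0 < 2 / 3 + a ^ 2 / 90 - 7 * b ^ 4 / 2700 - 8 * b ^ 6 / 99225 := by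
      by_contra hn
      nlinarith [mul_nonneg ha.le (sub_nonneg.2 (not_lt.1 hn))]
    exact h.trans_le (mul_le_mul har hk hpos.le (ha.le.trans har))
  rcases le_total r 2 with h | h
  · exact main 1.57 2 (by norm_num) h1 h (by norm_num)
  rcases le_total r 2.6 with h' | h'
  · exact main 2 2.6 (by norm_num) h h' (by norm_num)
  · exact main 2.6 3.142 (by norm_num) h' h2 (by norm_num)

/-! ### Integrability and the closed-form lower bound -/

lemma sin_pos_of_mem {θ : ℝ} (hθ : θ ∈ Set.Ioc 0 (π / 2)) : 0 < sin θ :=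
  sin_pos_of_pos_of_lt_pi hθ.1 (by linarith [hθ.2, pi_pos])

lemma integrand_lower (r θ : ℝ) (hr : 0 ≤ r) (hθ : θ ∈ Set.Ioc 0 (π / 2)) :
    cos θ ^ 3 * (r ^ 3 * ((1 + r ^ 2 / 12) - (r ^ 2 / 3 + 7 * r ^ 4 / 360) * sin θ ^ 2
        - 4 * r ^ 6 / 2835 * sin θ ^ 4)) ≤
      nilX r θ ^ 2 * deriv (fun t => nilZ r t) θ := by
  have hs := sin_pos_of_mem hθ
  have hc : 0 ≤ cos θ := cos_nonneg_of_mem_Icc ⟨by linarith [hθ.1, pi_pos], hθ.2⟩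
  rw [integrand_eq r θ hs]
  refine mul_le_mul_of_nonneg_left ?_ (by positivity)
  rw [le_div_iff₀ (by positivity), mul_comm]
  exact num_lower r _ hr hs.le (sin_le_one θ)

lemma integrand_upper (r θ : ℝ) (hr : 0 ≤ r) (hθ : θ ∈ Set.Ioc 0 (π / 2)) :
    nilX r θ ^ 2 * deriv (fun t => nilZ r t) θ ≤
      cos θ ^ 3 * (r ^ 3 + r ^ 5 / 12 + 8 * r ^ 7 / 315) := by
  have hs := sin_pos_of_mem hθ
  have hc : 0 ≤ cos θ := cos_nonneg_of_mem_Icc ⟨by linarith [hθ.1, pi_pos], hθ.2⟩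
  rw [integrand_eq r θ hs]
  refine mul_le_mul_of_nonneg_left ?_ (by positivity)
  rw [div_le_iff₀ (by positivity), mul_comm _ (sin θ ^ 5)]
  exact num_upper r _ hr hs.le (sin_le_one θ)

/-- Measurable and squeezed between two continuous functions, the integrand is integrable, so the
integral in `nilBallVol` is not a junk value. -/
lemma integrand_integrable (r : ℝ) (hr : 0 ≤ r) :
    IntervalIntegrable (fun θ => nilX r θ ^ 2 * deriv (fun t => nilZ r t) θ)
      MeasureTheory.volume 0 (π / 2) := by
  have hle : (0 : ℝ) ≤ π / 2 := by positivity
  have hX : Measurable (nilX r) := by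
    unfold nilX
    refine Measurable.ite (measurableSet_singleton 0) measurable_const ?_
    fun_prop
  have hm : Measurable (fun θ => nilX r θ ^ 2 * deriv (fun t => nilZ r t) θ) :=
    (hX.pow_const 2).mul (measurable_deriv _)
  have hlow : IntervalIntegrable (fun θ => cos θ ^ 3 * (r ^ 3 * ((1 + r ^ 2 / 12) -
      (r ^ 2 / 3 + 7 * r ^ 4 / 360) * sin θ ^ 2 - 4 * r ^ 6 / 2835 * sin θ ^ 4)))
      MeasureTheory.volume 0 (π / 2) := Continuous.intervalIntegrable (by fun_prop) _ _
  have hupp : IntervalIntegrable (fun θ => cos θ ^ 3 * (r ^ 3 + r ^ 5 / 12 + 8 * r ^ 7 / 315))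
      MeasureTheory.volume 0 (π / 2) := Continuous.intervalIntegrable (by fun_prop) _ _
  rw [intervalIntegrable_iff_integrableOn_Ioc_of_le hle] at *
  refine MeasureTheory.integrable_of_le_of_le hm.aestronglyMeasurable ?_ ?_ hlow hupp
  · exact (MeasureTheory.ae_restrict_mem measurableSet_Ioc).mono fun θ hθ =>
      integrand_lower r θ hr hθ
  · exact (MeasureTheory.ae_restrict_mem measurableSet_Ioc).mono fun θ hθ =>
      integrand_upper r θ hr hθ

lemma integral_lower (r : ℝ) :
    ∫ θ in (0 : ℝ)..(π / 2), cos θ ^ 3 * (r ^ 3 * ((1 + r ^ 2 / 12) -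
        (r ^ 2 / 3 + 7 * r ^ 4 / 360) * sin θ ^ 2 - 4 * r ^ 6 / 2835 * sin θ ^ 4)) =
      r ^ 3 * (2 / 3 + r ^ 2 / 90 - 7 * r ^ 4 / 2700 - 8 * r ^ 6 / 99225) := by
  -- The antiderivative in `s` of `(1 - s²) (α - β s² - γ s⁴)`, evaluated at `s = sin θ`.
  have hd : ∀ α β γ s : ℝ, HasDerivAt
      (fun s : ℝ => α * (s - s ^ 3 / 3) - β * (s ^ 3 / 3 - s ^ 5 / 5)
        - γ * (s ^ 5 / 5 - s ^ 7 / 7))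
      ((1 - s ^ 2) * (α - β * s ^ 2 - γ * s ^ 4)) s := by
    intro α β γ s
    have p3 := (hasDerivAt_pow 3 s).div_const 3
    have p5 := (hasDerivAt_pow 5 s).div_const 5
    have p7 := (hasDerivAt_pow 7 s).div_const 7
    refine (((((hasDerivAt_id s).sub p3).const_mul α).sub ((p3.sub p5).const_mul β)).sub
      ((p5.sub p7).const_mul γ)).congr_deriv ?_
    norm_num
    ring
  rw [intervalIntegral.integral_eq_sub_of_hasDerivAt
    (fun θ _ => ((((hd (1 + r ^ 2 / 12) (r ^ 2 / 3 + 7 * r ^ 4 / 360) (4 * r ^ 6 / 2835)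
      (sin θ)).comp θ (hasDerivAt_sin θ)).const_mul (r ^ 3)).congr_deriv ?_))
    (Continuous.intervalIntegrable (by fun_prop) _ _)]
  · simp only [Function.comp, sin_pi_div_two, sin_zero]
    ring
  · rw [← cos_sq']
    ring

/-- For `R ∈ [π/2, π]`, the density lower bound `V(R)/(2R)²` exceeds `1.43093459`. -/
theorem nil_density_bound_mid (R : ℝ) (hR : R ∈ Set.Icc (π / 2) π) :
    1.43093459 < nilBallVol R / (4 * R ^ 2) := by
  obtain ⟨h1, h2⟩ := hR
  have hp1 := pi_gt_d2
  have hp2 := pi_lt_d4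
  have hr : 0 < R := by linarith
  have hI := intervalIntegral.integral_mono_on_of_le_Ioo (by positivity : (0 : ℝ) ≤ π / 2)
    (Continuous.intervalIntegrable (by fun_prop) _ _) (integrand_integrable R hr.le)
    (fun θ hθ => integrand_lower R θ hr.le ⟨hθ.1, hθ.2.le⟩)
  rw [integral_lower] at hI
  have hf := final_poly R (by linarith) (by linarith)
  rw [lt_div_iff₀ (by positivity)]
  unfold nilBallVol
  have h3 : 2 * π * (R ^ 2 * 0.9115) ≤ 2 * π * ∫ θ in (0 : ℝ)..(π / 2),
      nilX R θ ^ 2 * deriv (fun t => nilZ R t) θ := by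
    refine mul_le_mul_of_nonneg_left (le_trans ?_ hI) (by positivity)
    nlinarith [mul_lt_mul_of_pos_left hf (by positivity : 0 < R ^ 2)]
  refine lt_of_lt_of_le ?_ h3
  nlinarith [mul_lt_mul_of_pos_right hp1 (by positivity : 0 < R ^ 2)]
end
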